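/- arXiv:2304.13825 — 2 statements merged into one kernel-verified Lean document; each statement's English description precedes it below -/
import Mathlib

section
/- Let S be a commutative ring equipped with an ℕ-grading S = ⊕_{i≥0} S_i and with the structure of a ℚ[X]-algebra such that S is finitely generated as a ℚ[X]-algebra and the structure map ℚ[X] → S is an isomorphism onto the degree-0 component S₀. If there exists a rational number a such that the Krull dimension of the quotient ring S/(X − a)S (the quotient of S by the ideal generated by the image of X − a) is at most 0, then the set of rational numbers b for which the Krull dimension of S/(X − b)S is at least 1 is finite. -/
/-!
Write `R = ℚ[X]` and let `I = S₊` be the irrelevant ideal, so that `S/I = S₀ = R` and `I` is prime.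
The proof looks at the finitely many minimal primes `p` of the Noetherian ring `S`; they are
homogeneous.

If `p ∩ R = 0`, then `p ⊆ I`, because `p` is homogeneous with zero component in degree `0`. The
ideal `M = I + (X - a)` is a prime containing `X - a`, and the primes over `X - a` are pairwise
incomparable since the fibre at `a` has dimension at most `0`; hence `M` is minimal over
`p + (X - a)`. Krull's principal ideal theorem in `S/p` forbids a chain `p ⊊ I ⊊ M`, so `p = I`
(`minimalPrime_eq_ker_of_comap_eq_bot`).

For each of the other minimal primes choose a nonzero `h p ∈ p ∩ R`. If `b` is a root of none of
the `h p`, then a prime `Q` containing `X - b` contains no `h p`, so the minimal prime below it is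
`I`; thus `Q` contains `I + (X - b)`, which is maximal with residue field `ℚ`. So every prime of
the fibre at `b` is maximal, and the exceptional `b` are among the roots of the polynomials `h p`.
-/

open Polynomial

/-- The retraction of the structure map onto the degree-zero component: projection to degree `0`
read as a ring homomorphism `S → ℚ[X]`. -/
theorem exists_projection_to_base
    {S : Type*} [CommRing S] [Algebra ℚ[X] S] (𝒜 : ℕ → AddSubgroup S) [GradedRing 𝒜]
    (hinj : Function.Injective (algebraMap ℚ[X] S))
    (hrange : Set.range (algebraMap ℚ[X] S) = (𝒜 0 : Set S)) :
    ∃ φ : S →+* ℚ[X], (∀ r, φ (algebraMap ℚ[X] S r) = r) ∧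
      ∀ s, algebraMap ℚ[X] S (φ s) = (DirectSum.decompose 𝒜 s 0 : S) := by
  let e : ℚ[X] ≃+* (algebraMap ℚ[X] S).range :=
    RingEquiv.ofBijective (algebraMap ℚ[X] S).rangeRestrict
      ⟨fun x y h => hinj (congrArg Subtype.val h), (algebraMap ℚ[X] S).rangeRestrict_surjective⟩
  have hmem : ∀ s, GradedRing.projZeroRingHom 𝒜 s ∈ (algebraMap ℚ[X] S).range := by
    intro s
    have : GradedRing.projZeroRingHom 𝒜 s ∈ (𝒜 0 : Set S) := (DirectSum.decompose 𝒜 s 0).2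
    rw [← hrange] at this
    exact this
  let φ : S →+* ℚ[X] :=
    (e.symm : (algebraMap ℚ[X] S).range →+* ℚ[X]).comp
      ((GradedRing.projZeroRingHom 𝒜).codRestrict _ hmem)
  have hφ : ∀ s, algebraMap ℚ[X] S (φ s) = (DirectSum.decompose 𝒜 s 0 : S) := fun s =>
    congrArg Subtype.val
      (e.apply_symm_apply ((GradedRing.projZeroRingHom 𝒜).codRestrict _ hmem s))
  refine ⟨φ, fun r => hinj ?_, hφ⟩
  rw [hφ]
  have hr : algebraMap ℚ[X] S r ∈ 𝒜 0 := by
    have : algebraMap ℚ[X] S r ∈ (𝒜 0 : Set S) := hrange ▸ Set.mem_range_self r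
    exact this
  exact DirectSum.decompose_of_mem_same 𝒜 hr

theorem isHomogeneous_of_mem_minimalPrimes
    {S : Type*} [CommRing S] (𝒜 : ℕ → AddSubgroup S) [GradedRing 𝒜]
    {p : Ideal S} (hp : p ∈ minimalPrimes S) : p.IsHomogeneous 𝒜 := by
  have hle := Ideal.toIdeal_homogeneousCore_le 𝒜 p
  have hprime : (p.homogeneousCore 𝒜).toIdeal.IsPrime := Ideal.IsPrime.homogeneousCore hp.1.1
  exact (Ideal.IsHomogeneous.iff_eq 𝒜 p).mpr (le_antisymm hle (hp.2 ⟨hprime, bot_le⟩ hle))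

theorem isMaximal_of_mem_of_krullDim_quotient_le_zero {S : Type*} [CommRing S] {x : S}
    (h : ringKrullDim (S ⧸ Ideal.span {x}) ≤ 0) {Q : Ideal S} (hQ : Q.IsPrime) (hx : x ∈ Q) :
    Q.IsMaximal := by
  have hdim : Ring.KrullDimLE 0 (S ⧸ Ideal.span {x}) := Ring.krullDimLE_iff.mpr (by simpa using h)
  have hker : RingHom.ker (Ideal.Quotient.mk (Ideal.span {x})) ≤ Q := by
    rwa [Ideal.mk_ker, Ideal.span_singleton_le_iff_mem]
  have hprime : (Q.map (Ideal.Quotient.mk (Ideal.span {x}))).IsPrime :=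
    Ideal.map_isPrime_of_surjective Ideal.Quotient.mk_surjective hker
  have hmax := hprime.isMaximal'
  have := Ideal.comap_isMaximal_of_surjective (Ideal.Quotient.mk (Ideal.span {x}))
    Ideal.Quotient.mk_surjective (K := Q.map (Ideal.Quotient.mk (Ideal.span {x})))
  rwa [Ideal.comap_map_of_surjective _ Ideal.Quotient.mk_surjective,
    ← RingHom.ker_eq_comap_bot, sup_eq_left.mpr hker] at this

/-- A minimal prime meeting the base ring trivially is the irrelevant ideal, here the kernel of the
projection `φ` to degree `0`. This is where the fibre of dimension at most `0` enters, through
Krull's principal ideal theorem. -/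
theorem minimalPrime_eq_ker_of_comap_eq_bot
    {S : Type*} [CommRing S] [IsNoetherianRing S] [Algebra ℚ[X] S]
    (𝒜 : ℕ → AddSubgroup S) [GradedRing 𝒜] {φ : S →+* ℚ[X]}
    (hφ : ∀ r, φ (algebraMap ℚ[X] S r) = r)
    (hproj : ∀ s, algebraMap ℚ[X] S (φ s) = (DirectSum.decompose 𝒜 s 0 : S))
    {a : ℚ} (ha : ringKrullDim (S ⧸ Ideal.span {algebraMap ℚ[X] S (X - C a)}) ≤ 0)
    {p : Ideal S} (hp : p ∈ minimalPrimes S)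
    (hbot : ∀ r, algebraMap ℚ[X] S r ∈ p → r = 0) : p = RingHom.ker φ := by
  set t : S := algebraMap ℚ[X] S (X - C a) with ht
  let M : Ideal S := RingHom.ker ((evalRingHom a).comp φ)
  have hI : (RingHom.ker φ).IsPrime := RingHom.ker_isPrime φ
  have hM : M.IsPrime := RingHom.ker_isPrime _
  have htM : t ∈ M := by simp [M, RingHom.mem_ker, ht, hφ, -map_sub]
  have hpI : p ≤ RingHom.ker φ := fun x hx => RingHom.mem_ker.mpr <| hbot _ <| by
    rw [hproj]
    exact isHomogeneous_of_mem_minimalPrimes 𝒜 hp 0 hx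
  have hIM : RingHom.ker φ < M := by
    refine lt_of_le_of_ne (fun x hx => ?_) fun h => ?_
    · simp [M, RingHom.mem_ker, RingHom.mem_ker.mp hx]
    · have h0 : φ t = 0 := RingHom.mem_ker.mp (h ▸ htM)
      rw [ht, hφ] at h0
      exact X_sub_C_ne_zero a h0
  have hMmin : M ∈ (Ideal.span (insert t (p : Set S))).minimalPrimes := by
    refine ⟨⟨hM, Ideal.span_le.mpr (Set.insert_subset htM (hpI.trans hIM.le))⟩, ?_⟩
    rintro Q ⟨hQ, hle⟩ hQM
    have htQ : t ∈ Q := hle (Ideal.subset_span (Set.mem_insert _ _))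
    exact ((isMaximal_of_mem_of_krullDim_quotient_le_zero ha hQ htQ).eq_of_le hM.ne_top hQM).ge
  have hmin := Ideal.mem_minimalPrimes_span_of_mem_minimalPrimes_span_insert hIM t (p : Set S)
    hMmin (p : Set S) hpI
    (fun x hx => Ideal.le_radical (Ideal.subset_span (Set.mem_insert_of_mem _ hx)))
  rw [Ideal.span_eq] at hmin
  exact le_antisymm hpI (hmin.2 ⟨hp.1.1, le_rfl⟩ hpI)

/-- Let `S` be a commutative ring with an `ℕ`-grading `S = ⊕_{i ≥ 0} Sᵢ` and a `ℚ[X]`-algebra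
structure such that `S` is a finitely generated `ℚ[X]`-algebra and the structure map
`ℚ[X] → S` is an isomorphism onto the degree-zero component `S₀`.  If for some `a ∈ ℚ` the
fibre `S/(X − a)S` has Krull dimension at most `0`, then the set of `b ∈ ℚ` for which the
fibre `S/(X − b)S` has Krull dimension at least `1` is finite. -/
theorem generic_fibre_dimension_zero
    (S : Type*) [CommRing S] [Algebra (Polynomial ℚ) S]
    (𝒜 : ℕ → AddSubgroup S) [GradedRing 𝒜]
    (hfg : Algebra.FiniteType (Polynomial ℚ) S)
    (hinj : Function.Injective (algebraMap (Polynomial ℚ) S))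
    (hrange : Set.range (algebraMap (Polynomial ℚ) S) = (𝒜 0 : Set S))
    (hfib : ∃ a : ℚ, ringKrullDim
      (S ⧸ Ideal.span {algebraMap (Polynomial ℚ) S (X - C a)}) ≤ 0) :
    {b : ℚ | 1 ≤ ringKrullDim
      (S ⧸ Ideal.span {algebraMap (Polynomial ℚ) S (X - C b)})}.Finite := by
  classical
  obtain ⟨a, ha⟩ := hfib
  have hnoeth : IsNoetherianRing S := Algebra.FiniteType.isNoetherianRing ℚ[X] S
  obtain ⟨φ, hφ, hproj⟩ := exists_projection_to_base 𝒜 hinj hrange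
  have hfin : (minimalPrimes S).Finite := minimalPrimes.finite_of_isNoetherianRing S
  have hex : ∀ p : Ideal S, ∃ h : ℚ[X], h ≠ 0 ∧
      (p ∈ minimalPrimes S → p ≠ RingHom.ker φ → algebraMap ℚ[X] S h ∈ p) := by
    intro p
    by_cases hp : p ∈ minimalPrimes S ∧ p ≠ RingHom.ker φ
    · have : ¬ ∀ r, algebraMap ℚ[X] S r ∈ p → r = 0 := fun hbot =>
        hp.2 (minimalPrime_eq_ker_of_comap_eq_bot 𝒜 hφ hproj ha hp.1 hbot)
      push Not at this
      obtain ⟨r, hr, hr0⟩ := this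
      exact ⟨r, hr0, fun _ _ => hr⟩
    · exact ⟨1, one_ne_zero, fun h1 h2 => absurd ⟨h1, h2⟩ hp⟩
  choose h hh0 hhp using hex
  refine (hfin.biUnion fun p _ => (h p).finite_setOfPred_isRoot (hh0 p)).subset fun b hb => ?_
  by_contra hroot
  simp only [Set.mem_iUnion, not_exists] at hroot
  have hdim : Ring.KrullDimLE 0 (S ⧸ Ideal.span {algebraMap ℚ[X] S (X - C b)}) := by
    refine Ring.krullDimLE_zero_iff.mpr fun J hJ => ?_
    set π := Ideal.Quotient.mk (Ideal.span {algebraMap ℚ[X] S (X - C b)}) with hπ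
    have hsurj : Function.Surjective π := Ideal.Quotient.mk_surjective
    have hQ : (J.comap π).IsPrime := hJ.comap π
    have hbQ : algebraMap ℚ[X] S (X - C b) ∈ J.comap π := by
      rw [Ideal.mem_comap, Ideal.Quotient.eq_zero_iff_mem.mpr (Ideal.mem_span_singleton_self _)]
      exact J.zero_mem
    obtain ⟨p, hp, hpQ⟩ := Ideal.exists_minimalPrimes_le (bot_le : ⊥ ≤ J.comap π)
    have hmodb : ∀ r : ℚ[X], algebraMap ℚ[X] S r - algebraMap ℚ[X] S (C (r.eval b)) ∈
        J.comap π := by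
      intro r
      obtain ⟨q, hq⟩ := X_sub_C_dvd_sub_C_eval (a := b) (p := r)
      rw [← map_sub, hq, map_mul]
      exact Ideal.mul_mem_right _ _ hbQ
    -- A constant lying in a proper ideal vanishes, because nonzero constants are units.
    have hconst : ∀ r : ℚ[X], algebraMap ℚ[X] S r ∈ J.comap π → r.eval b = 0 := by
      intro r hr
      by_contra hne
      have hc : algebraMap ℚ[X] S (C (r.eval b)) ∈ J.comap π := by
        simpa using (J.comap π).sub_mem hr (hmodb r)
      exact hQ.ne_top (Ideal.eq_top_of_isUnit_mem _ hc
        ((isUnit_C.mpr (isUnit_iff_ne_zero.mpr hne)).map _))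
    have hpI : p = RingHom.ker φ := by
      by_contra hne
      exact hroot p hp (hconst _ (hpQ (hhp p hp hne)))
    have hker : (RingHom.ker ((evalRingHom b).comp φ)).IsMaximal :=
      RingHom.ker_isMaximal_of_surjective _ fun c => ⟨algebraMap ℚ[X] S (C c), by simp [hφ]⟩
    have hle : RingHom.ker ((evalRingHom b).comp φ) ≤ J.comap π := by
      intro x hx
      have hx0 : (φ x).eval b = 0 := by simpa [RingHom.mem_ker] using hx
      have h1 : x - algebraMap ℚ[X] S (φ x) ∈ J.comap π :=
        hpQ (by rw [hpI, RingHom.mem_ker, map_sub, hφ, sub_self])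
      have h2 := hmodb (φ x)
      rw [hx0, C_0, map_zero, sub_zero] at h2
      simpa using (J.comap π).add_mem h1 h2
    have hmax : (J.comap π).IsMaximal := hker.eq_of_le hQ.ne_top hle ▸ hker
    have hJ' := Ideal.map_eq_top_or_isMaximal_of_surjective π hsurj hmax
    rw [Ideal.map_comap_of_surjective π hsurj] at hJ'
    exact hJ'.resolve_left hJ.ne_top
  have h0 := Ring.krullDimLE_iff.mp hdim
  exact absurd (le_trans hb h0) (by decide)
end

section
/- Let ℍ = Quaternion ℝ, let ι : ℂ → ℍ be the standard ring embedding, and consider the action of Circle × Circle on ℙ²(ℍ) = Projectivization ℍ (Fin 3 → ℍ) given by ((λ₁, λ₂), [v]) ↦ [(v₀, v₁·ι(λ₁), v₂·ι(λ₂))]. Then for every nonzero v : Fin 3 → ℍ, the point [v] is fixed by every element (λ₁, λ₂) of Circle × Circle (i.e. [(v₀, v₁·ι(λ₁), v₂·ι(λ₂))] = [v] for all λ₁, λ₂ ∈ Circle) if and only if there is an index i ∈ Fin 3 such that v_j = 0 for all j ≠ i. In particular, the fixed set of the torus action consists of exactly the three coordinate points [1:0:0], [0:1:0], [0:0:1].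 -/
/-!
The elements `(-1, 1)` and `(1, -1)` of the torus already detect the fixed points.  If `(-1, 1)`
fixes `[v]`, there is a scalar `a` with `a v₀ = v₀`, `a v₁ = -v₁` and `a v₂ = v₂`; since `a` cannot
be both `1` and `-1`, either `v₁ = 0` or `v₀ = v₂ = 0`.  Symmetrically, `(1, -1)` gives `v₂ = 0` or
`v₀ = v₁ = 0`.  In every combination at most one coordinate survives.  Conversely, if only `vᵢ` is
nonzero, right multiplication of `vᵢ` by a scalar `q` equals left multiplication by
`vᵢ q vᵢ⁻¹`, so the point does not move.
-/

/-- The standard ring embedding `ι : ℂ → ℍ` of the complex numbers into the real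
quaternions, sending `a + b·i` to the quaternion `a + b·i`. -/
noncomputable def ι : ℂ →+* Quaternion ℝ := Quaternion.ofComplex.toRingHom

/-- The map on homogeneous coordinates underlying the torus action of `Circle × Circle`
on `ℙ²(ℍ)`:  `(λ₁, λ₂) · (v₀, v₁, v₂) = (v₀, v₁·ι(λ₁), v₂·ι(λ₂))`. -/
noncomputable def torusAct (l : Circle × Circle) (v : Fin 3 → Quaternion ℝ) :
    Fin 3 → Quaternion ℝ :=
  ![v 0, v 1 * ι (l.1 : ℂ), v 2 * ι (l.2 : ℂ)]

lemma torusAct_ne_zero (l : Circle × Circle) {v : Fin 3 → Quaternion ℝ} (hv : v ≠ 0) :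
    torusAct l v ≠ 0 := by
  intro h
  apply hv
  have h0 := congrFun h 0
  have h1 := congrFun h 1
  have h2 := congrFun h 2
  simp [torusAct] at h0 h1 h2
  ext1 j
  fin_cases j <;> simpa

/-- Acting as `1` on a nonzero quaternion forces `a = 1`, so `a` cannot also
act as `-1` on a nonzero one. -/
lemma eq_zero_or_eq_zero_of_mul {a x y : Quaternion ℝ} (hx : a * x = x) (hy : a * y = -y) :
    y = 0 ∨ x = 0 := by
  by_cases h : x = 0
  · exact Or.inr h
  · left
    have ha : a = 1 := mul_right_cancel₀ h (by rw [hx, one_mul])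
    rw [ha, one_mul] at hy
    have h2 : (2 : ℝ) • y = 0 := by rw [two_smul]; exact eq_neg_iff_add_eq_zero.1 hy
    exact (smul_eq_zero.1 h2).resolve_left two_ne_zero

/-- A point `[v] ∈ ℙ²(ℍ)` is fixed by every element of the torus `Circle × Circle` acting
by `(λ₁, λ₂)·[h₀:h₁:h₂] = [h₀ : h₁·ι(λ₁) : h₂·ι(λ₂)]` if and only if all but one of the
homogeneous coordinates of `v` vanish, i.e. the fixed points are exactly the three
coordinate points `[1:0:0]`, `[0:1:0]`, `[0:0:1]`. -/
theorem torus_action_fixed_points (v : Fin 3 → Quaternion ℝ) (hv : v ≠ 0) :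
    (∀ (l : Circle × Circle) (h : torusAct l v ≠ 0),
       Projectivization.mk (Quaternion ℝ) (torusAct l v) h =
         Projectivization.mk (Quaternion ℝ) v hv) ↔
    ∃ i : Fin 3, ∀ j : Fin 3, j ≠ i → v j = 0 := by
  constructor
  · intro H
    have key (l : Circle × Circle) : ∃ a : Quaternion ℝ, a • v = torusAct l v :=
      (Projectivization.mk_eq_mk_iff' _ _ _ (torusAct_ne_zero l hv) hv).1
        (H l (torusAct_ne_zero l hv))
    obtain ⟨a, ha⟩ := key (-1, 1)
    obtain ⟨b, hb⟩ := key (1, -1)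
    have a0 : a * v 0 = v 0 := by simpa [torusAct] using congrFun ha 0
    have a1 : a * v 1 = -v 1 := by simpa [torusAct] using congrFun ha 1
    have a2 : a * v 2 = v 2 := by simpa [torusAct] using congrFun ha 2
    have b0 : b * v 0 = v 0 := by simpa [torusAct] using congrFun hb 0
    have b1 : b * v 1 = v 1 := by simpa [torusAct] using congrFun hb 1
    have b2 : b * v 2 = -v 2 := by simpa [torusAct] using congrFun hb 2
    have h10 := eq_zero_or_eq_zero_of_mul a0 a1
    have h12 := eq_zero_or_eq_zero_of_mul a2 a1
    have h20 := eq_zero_or_eq_zero_of_mul b0 b2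
    simp only [Fin.exists_fin_succ, Fin.forall_fin_succ]
    simp
    tauto
  · rintro ⟨i, hi⟩ l h
    rw [Projectivization.mk_eq_mk_iff']
    have hvi : v i ≠ 0 := by
      intro h0
      apply hv
      ext1 j
      by_cases hj : j = i
      · rw [hj, h0, Pi.zero_apply]
      · exact hi j hj
    refine ⟨torusAct l v i * (v i)⁻¹, ?_⟩
    ext1 j
    by_cases hj : j = i
    · subst hj
      simp [hvi]
    · have hj0 := hi j hj
      have : torusAct l v j = 0 := by
        fin_cases j <;> simp_all [torusAct]
      rw [this, Pi.smul_apply, hj0, smul_zero]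
end
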